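/- arXiv:1407.6086 — 2 statements merged into one kernel-verified Lean document; each statement's English description precedes it below -/
import Mathlib

section
/- Let b be a prime, α ≥ 2 an integer, and n a positive integer. For every real λ > 1/α, Σ_{k ∈ E, b^n | k} b^{−λ μ_α(⌊k/b⌋)} ≤ A₂ / b^{2λn}, where A₂ = (1/(b−1)) Σ_{v=2}^{α−1} ∏_{i=1}^{v} (b^{λ}(b−1))/(b^{λi}−1) + (b^{λ}/(b^{λα}−b)) ∏_{i=1}^{α−1} (b^{λ}(b−1))/(b^{λi}−1). -/
namespace QMC

/-- the `i`-th `b`-adic digit of `k`. -/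
def digit (b k i : ℕ) : ℕ := k / b ^ i % b

/-- `μ_α(k) = a₁ + ⋯ + a_{min(v,α)}`, the sum of the `α` largest positions (counted
from `1`) of nonzero `b`-adic digits of `k`; `μ_α(0) = 0`. -/
def mualpha (b α k : ℕ) : ℕ :=
  (((((Finset.range (k + 1)).filter fun i => digit b k i ≠ 0).sort (· ≤ ·)).reverse.take
    α).map (· + 1)).sum

/-- the set `E` of positive integers whose `b`-adic digit sum is divisible by `b`. -/
def Eset (b : ℕ) : Set ℕ := {k | k ≠ 0 ∧ (b : ℕ) ∣ (Nat.digits b k).sum}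

/-- the constant `A_{α,b,λ,2}`. -/
noncomputable def A2 (b α : ℕ) (lam : ℝ) : ℝ :=
  (1 / ((b : ℝ) - 1)) * ∑ v ∈ Finset.Icc 2 (α - 1), ∏ i ∈ Finset.Icc 1 v,
      ((b : ℝ) ^ lam * ((b : ℝ) - 1)) / ((b : ℝ) ^ (lam * i) - 1) +
    ((b : ℝ) ^ lam / ((b : ℝ) ^ (lam * α) - b)) *
      ∏ i ∈ Finset.Icc 1 (α - 1), ((b : ℝ) ^ lam * ((b : ℝ) - 1)) / ((b : ℝ) ^ (lam * i) - 1)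

lemma sort_insert_max (s : Finset ℕ) (q : ℕ) (h : ∀ a ∈ s, a < q) :
    ((insert q s).sort (· ≤ ·)).reverse = q :: (s.sort (· ≤ ·)).reverse := by
  have hq : q ∉ s := fun hh => lt_irrefl _ (h q hh)
  have : (insert q s).sort (· ≤ ·) = s.sort (· ≤ ·) ++ [q] := by
    refine List.Perm.eq_of_pairwise' (r := (· ≤ ·)) (Finset.pairwise_sort _ _) ?_ ?_
    · rw [List.pairwise_append]
      refine ⟨Finset.pairwise_sort _ _, List.pairwise_singleton _ _, ?_⟩
      intro a ha c hc
      rw [Finset.mem_sort] at ha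
      rw [List.mem_singleton] at hc
      subst hc
      exact (h a ha).le
    · rw [List.perm_ext_iff_of_nodup (Finset.sort_nodup _ _)]
      · intro a
        simp [or_comm]
      · rw [List.nodup_append]
        refine ⟨Finset.sort_nodup _ _, List.nodup_singleton _, ?_⟩
        intro a ha c hc
        rw [Finset.mem_sort] at ha
        rw [List.mem_singleton] at hc
        subst hc
        exact (h a ha).ne
  rw [this]; simp

lemma digit_ne_zero_lt {b k i q : ℕ} (hb : 2 ≤ b) (hk : k < b ^ q) (h : digit b k i ≠ 0) :
    i < q := by
  by_contra hc
  apply h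
  have : b ^ q ≤ b ^ i := Nat.pow_le_pow_right (by omega) (by omega)
  unfold digit
  rw [Nat.div_eq_of_lt (by omega)]; simp

lemma filter_range_eq {b k q : ℕ} (hb : 2 ≤ b) (hk : k < b ^ q) :
    ((Finset.range (k + 1)).filter fun i => digit b k i ≠ 0) =
      (Finset.range q).filter fun i => digit b k i ≠ 0 := by
  ext i
  simp only [Finset.mem_filter, Finset.mem_range]
  constructor
  · rintro ⟨_, h⟩; exact ⟨digit_ne_zero_lt hb hk h, h⟩
  · rintro ⟨_, h⟩
    refine ⟨?_, h⟩
    exact digit_ne_zero_lt hb (lt_trans (Nat.lt_succ_self k) (Nat.lt_pow_self (by omega))) h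

lemma mualpha_zero_right (b α : ℕ) : mualpha b α 0 = 0 := by
  simp [mualpha, digit]

lemma mualpha_zero_left (b k : ℕ) : mualpha b 0 k = 0 := by
  simp [mualpha]

lemma mualpha_succ {b β q c l : ℕ} (hb : 2 ≤ b) (hc : 0 < c) (hcb : c < b) (hl : l < b ^ q) :
    mualpha b (β + 1) (b ^ q * c + l) = (q + 1) + mualpha b β l := by
  have hbp : 0 < b ^ q := by positivity
  have hk : b ^ q * c + l < b ^ (q + 1) := by
    rw [pow_succ]
    nlinarith
  have hins : ((Finset.range (b ^ q * c + l + 1)).filter fun i => digit b (b ^ q * c + l) i ≠ 0) =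
      insert q ((Finset.range (l + 1)).filter fun i => digit b l i ≠ 0) := by
    rw [filter_range_eq hb hk, filter_range_eq hb hl, Finset.range_add_one, Finset.filter_insert]
    have hq : digit b (b ^ q * c + l) q ≠ 0 := by
      unfold digit
      rw [Nat.mul_add_div hbp, Nat.div_eq_of_lt hl, add_zero, Nat.mod_eq_of_lt hcb]; omega
    rw [if_pos hq]
    congr 1
    apply Finset.filter_congr
    intro i hi
    rw [Finset.mem_range] at hi
    have : digit b (b ^ q * c + l) i = digit b l i := by
      unfold digit
      obtain ⟨d, rfl⟩ : ∃ d, q = i + 1 + d := ⟨q - i - 1, by omega⟩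
      have : b ^ (i + 1 + d) * c + l = b ^ i * (b * (b ^ d * c)) + l := by ring
      rw [this, Nat.mul_add_div (by positivity), Nat.mul_add_mod]
    rw [this]
  unfold mualpha
  rw [hins, sort_insert_max]
  · simp
  · intro a ha
    rw [Finset.mem_filter] at ha
    exact digit_ne_zero_lt hb hl ha.2

lemma digits_sum_rec {b : ℕ} (hb : 2 ≤ b) (k : ℕ) :
    (Nat.digits b k).sum = k % b + (Nat.digits b (k / b)).sum := by
  rcases Nat.eq_zero_or_pos k with rfl | h
  · simp
  · rw [Nat.digits_def' (by omega) h]; simp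

lemma digits_sum_add {b c : ℕ} (hb : 2 ≤ b) (hcb : c < b) (q : ℕ) : ∀ l, l < b ^ q →
    (Nat.digits b (b ^ q * c + l)).sum = c + (Nat.digits b l).sum := by
  induction q with
  | zero =>
    intro l hl
    have : l = 0 := by simpa using hl
    subst this
    rw [digits_sum_rec hb]
    simp [Nat.mod_eq_of_lt hcb, Nat.div_eq_of_lt hcb]
  | succ q ih =>
    intro l hl
    rw [digits_sum_rec hb, digits_sum_rec hb l]
    have e : b ^ (q + 1) * c + l = b * (b ^ q * c) + l := by ring
    rw [e, Nat.mul_add_mod, Nat.mul_add_div (by omega), ih]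
    · ring
    · rw [Nat.div_lt_iff_lt_mul (by omega)]
      rwa [pow_succ] at hl

/-- splitting off the top digit -/
lemma sum_range_top (b N : ℕ) (f : ℕ → ℝ) :
    ∑ t ∈ Finset.range (b ^ (N + 1)), f t =
      ∑ c ∈ Finset.range b, ∑ l ∈ Finset.range (b ^ N), f (b ^ N * c + l) := by
  rw [pow_succ]
  generalize b ^ N = B
  induction b with
  | zero => simp
  | succ b ih => rw [Nat.mul_succ, Finset.sum_range_add, ih, Finset.sum_range_succ]

/-- the partial sums -/
noncomputable def ss (b m : ℕ) (x : ℝ) (β i : ℕ) : ℝ :=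
  ∑ t ∈ Finset.range (b ^ i), x ^ mualpha b β (b ^ m * t)

lemma mualpha_pow_mul {b β m N c l : ℕ} (hb : 2 ≤ b) (hc : 0 < c) (hcb : c < b) (hl : l < b ^ N) :
    mualpha b (β + 1) (b ^ m * (b ^ N * c + l)) = (m + 1 + N) + mualpha b β (b ^ m * l) := by
  have e : b ^ m * (b ^ N * c + l) = b ^ (m + N) * c + b ^ m * l := by ring
  rw [e, mualpha_succ hb hc hcb]
  · ring
  · rw [pow_add]
    exact Nat.mul_lt_mul_of_pos_left hl (by positivity)

lemma ss_zero (b m : ℕ) (x : ℝ) (i : ℕ) : ss b m x 0 i = (b : ℝ) ^ i := by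
  simp [ss, mualpha_zero_left]

lemma ss_succ_zero (b m : ℕ) (x : ℝ) (β : ℕ) : ss b m x β 0 = 1 := by
  simp [ss, mualpha_zero_right]

lemma ss_succ_succ {b : ℕ} (hb : 2 ≤ b) (m : ℕ) (x : ℝ) (β i : ℕ) :
    ss b m x (β + 1) (i + 1) =
      ss b m x (β + 1) i + ((b : ℝ) - 1) * x ^ (m + 1 + i) * ss b m x β i := by
  obtain ⟨a, rfl⟩ : ∃ a, b = a + 1 := ⟨b - 1, by omega⟩
  unfold ss
  rw [sum_range_top, Finset.sum_range_succ']
  have : ∀ c ∈ Finset.range a, ∑ l ∈ Finset.range ((a + 1) ^ i),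
      x ^ mualpha (a + 1) (β + 1) ((a + 1) ^ m * ((a + 1) ^ i * (c + 1) + l)) =
      x ^ (m + 1 + i) * ∑ l ∈ Finset.range ((a + 1) ^ i),
        x ^ mualpha (a + 1) β ((a + 1) ^ m * l) := by
    intro c hc
    rw [Finset.mem_range] at hc
    rw [Finset.mul_sum]
    apply Finset.sum_congr rfl
    intro l hl
    rw [Finset.mem_range] at hl
    rw [mualpha_pow_mul hb (by omega) (by omega) hl, pow_add]
  rw [Finset.sum_congr rfl this]
  simp
  ring

lemma ss_eq {b : ℕ} (hb : 2 ≤ b) (m : ℕ) (x : ℝ) (β i : ℕ) :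
    ss b m x (β + 1) i =
      1 + ∑ q ∈ Finset.range i, ((b : ℝ) - 1) * x ^ (m + 1 + q) * ss b m x β q := by
  induction i with
  | zero => simp [ss_succ_zero]
  | succ i ih => rw [ss_succ_succ hb, ih, Finset.sum_range_succ]; ring

/-- the sum over `E` truncated -/
noncomputable def es (b m : ℕ) (x : ℝ) (β N : ℕ) : ℝ :=
  ∑ t ∈ Finset.range (b ^ N),
    if t ≠ 0 ∧ b ∣ (Nat.digits b t).sum then x ^ mualpha b β (b ^ m * t) else 0

lemma es_step {b : ℕ} (hb : 2 ≤ b) (m : ℕ) {x : ℝ} (hx : 0 ≤ x) (β N : ℕ) :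
    es b m x (β + 1) (N + 1) ≤
      es b m x (β + 1) N + x ^ (m + 1 + N) * (ss b m x β N - 1) := by
  have key : ∑ c ∈ Finset.Ico 1 b, ∑ l ∈ Finset.range (b ^ N),
      (if (b ^ N * c + l) ≠ 0 ∧ b ∣ (Nat.digits b (b ^ N * c + l)).sum then
        x ^ mualpha b (β + 1) (b ^ m * (b ^ N * c + l)) else 0) ≤
      x ^ (m + 1 + N) * (ss b m x β N - 1) := by
    have h1 : ss b m x β N - 1 = ∑ l ∈ Finset.range (b ^ N),
        if l = 0 then 0 else x ^ mualpha b β (b ^ m * l) := by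
      have hpos : 0 < b ^ N := by positivity
      obtain ⟨B, hB⟩ : ∃ B, b ^ N = B + 1 := ⟨b ^ N - 1, by omega⟩
      unfold ss
      rw [hB, Finset.sum_range_succ', Finset.sum_range_succ']
      simp [mualpha_zero_right]
    rw [h1, Finset.sum_comm, Finset.mul_sum]
    apply Finset.sum_le_sum
    intro l hl
    rw [Finset.mem_range] at hl
    have h2 : ∀ c ∈ Finset.Ico 1 b, (if (b ^ N * c + l) ≠ 0 ∧
        b ∣ (Nat.digits b (b ^ N * c + l)).sum then
        x ^ mualpha b (β + 1) (b ^ m * (b ^ N * c + l)) else 0) =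
        if b ∣ c + (Nat.digits b l).sum then
          x ^ (m + 1 + N) * x ^ mualpha b β (b ^ m * l) else 0 := by
      intro c hc
      rw [Finset.mem_Ico] at hc
      rw [mualpha_pow_mul hb (by omega) (by omega) hl, digits_sum_add hb hc.2 N l hl, pow_add]
      have : b ^ N * c + l ≠ 0 := by
        have : 0 < b ^ N * c := Nat.mul_pos (by positivity) (by omega)
        omega
      simp only [ne_eq, this, not_false_eq_true, true_and]
    rw [Finset.sum_congr rfl h2, ← Finset.sum_filter, Finset.sum_const, nsmul_eq_mul]
    split_ifs with h0
    · subst h0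
      rw [Finset.filter_eq_empty_iff.2]
      · simp
      · intro c hc hd
        rw [Finset.mem_Ico] at hc
        simp at hd
        exact absurd (Nat.le_of_dvd (by omega) hd) (by omega)
    · have hcard : ((Finset.Ico 1 b).filter fun c => b ∣ c + (Nat.digits b l).sum).card ≤ 1 := by
        rw [Finset.card_le_one]
        intro a ha c hc
        simp only [Finset.mem_filter, Finset.mem_Ico] at ha hc
        have h3 : a + (Nat.digits b l).sum ≡ c + (Nat.digits b l).sum [MOD b] :=
          ((Nat.modEq_zero_iff_dvd).2 ha.2).trans ((Nat.modEq_zero_iff_dvd).2 hc.2).symm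
        exact (Nat.ModEq.add_right_cancel' _ h3).eq_of_lt_of_lt ha.1.2 hc.1.2
      have : (((Finset.Ico 1 b).filter fun c => b ∣ c + (Nat.digits b l).sum).card : ℝ) ≤ 1 := by
        exact_mod_cast hcard
      have h4 : 0 ≤ x ^ (m + 1 + N) * x ^ mualpha b β (b ^ m * l) := by positivity
      nlinarith
  have hs : es b m x (β + 1) (N + 1) = es b m x (β + 1) N + ∑ c ∈ Finset.Ico 1 b,
      ∑ l ∈ Finset.range (b ^ N),
      (if (b ^ N * c + l) ≠ 0 ∧ b ∣ (Nat.digits b (b ^ N * c + l)).sum then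
        x ^ mualpha b (β + 1) (b ^ m * (b ^ N * c + l)) else 0) := by
    unfold es
    rw [sum_range_top, Finset.range_eq_Ico, Finset.sum_eq_sum_Ico_succ_bot (by omega)]
    simp
  rw [hs]
  linarith

lemma es_le {b : ℕ} (hb : 2 ≤ b) (m : ℕ) {x : ℝ} (hx : 0 ≤ x) (β N : ℕ) :
    es b m x (β + 1) N ≤ ∑ i ∈ Finset.range N, x ^ (m + 1 + i) * (ss b m x β i - 1) := by
  induction N with
  | zero => simp [es]
  | succ N ih =>
    rw [Finset.sum_range_succ]
    have := es_step hb m hx β N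
    linarith

/-- summation by parts -/
lemma swap_le (n j : ℕ) (a x : ℝ) (ha : 0 ≤ a) (hx : 0 ≤ x) (hx1 : x ^ j < 1) (s : ℕ → ℝ)
    (hs : ∀ i, 0 ≤ s i) (N : ℕ) :
    ∑ i ∈ Finset.range N, x ^ (j * (n + i)) * ∑ q ∈ Finset.range i, a * x ^ (n + q) * s q ≤
      a * x ^ j / (1 - x ^ j) * ∑ i ∈ Finset.range N, x ^ ((j + 1) * (n + i)) * s i := by
  have hz : 0 < 1 - x ^ j := by linarith
  have key : ∑ i ∈ Finset.range N, x ^ (j * (n + i)) *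
      ∑ q ∈ Finset.range i, a * x ^ (n + q) * s q +
      x ^ (j * (n + N)) / (1 - x ^ j) * ∑ q ∈ Finset.range N, a * x ^ (n + q) * s q =
      a * x ^ j / (1 - x ^ j) * ∑ i ∈ Finset.range N, x ^ ((j + 1) * (n + i)) * s i := by
    induction N with
    | zero => simp
    | succ N ih =>
      rw [Finset.sum_range_succ, Finset.sum_range_succ _ N, Finset.sum_range_succ _ N, mul_add _ _ (x ^ ((j + 1) * (n + N)) * s N), ← ih]
      have e1 : x ^ (j * (n + (N + 1))) = x ^ (j * (n + N)) * x ^ j := by ring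
      have e2 : x ^ ((j + 1) * (n + N)) = x ^ (j * (n + N)) * x ^ (n + N) := by ring
      rw [e1, e2]
      field_simp
      ring
  have : 0 ≤ x ^ (j * (n + N)) / (1 - x ^ j) * ∑ q ∈ Finset.range N, a * x ^ (n + q) * s q := by
    apply mul_nonneg (by positivity)
    apply Finset.sum_nonneg
    intro q _
    have := hs q
    positivity
  linarith

/-- the closed form -/
noncomputable def KK (b x : ℝ) (n : ℕ) : ℕ → ℕ → ℝ
  | 0, j => x ^ (j * n) / (1 - b * x ^ j)
  | β + 1, j => x ^ (j * n) / (1 - x ^ j) + (b - 1) * x ^ j / (1 - x ^ j) * KK b x n β (j + 1)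

lemma geom_le {r : ℝ} (h0 : 0 ≤ r) (h1 : r < 1) (N : ℕ) :
    ∑ i ∈ Finset.range N, r ^ i ≤ 1 / (1 - r) := by
  have h2 : 0 < 1 - r := by linarith
  rw [le_div_iff₀ h2, geom_sum_mul_neg]
  have : 0 ≤ r ^ N := by positivity
  linarith

lemma D_le {b : ℕ} (hb : 2 ≤ b) (m : ℕ) {x : ℝ} (hx : 0 ≤ x) (hx1 : x < 1) (N β : ℕ) :
    ∀ j, 1 ≤ j → (b : ℝ) * x ^ (j + β) < 1 →
    ∑ i ∈ Finset.range N, x ^ (j * (m + 1 + i)) * ss b m x β i ≤ KK b x (m + 1) β j := by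
  have hss : ∀ β i, 0 ≤ ss b m x β i := by
    intro β i
    exact Finset.sum_nonneg fun t _ => by positivity
  have hb1 : (0 : ℝ) ≤ (b : ℝ) - 1 := by
    have : (2 : ℝ) ≤ b := by exact_mod_cast hb
    linarith
  induction β with
  | zero =>
    intro j hj h
    have : ∀ i ∈ Finset.range N, x ^ (j * (m + 1 + i)) * ss b m x 0 i =
        x ^ (j * (m + 1)) * (b * x ^ j) ^ i := by
      intro i _
      rw [ss_zero]; ring
    rw [Finset.sum_congr rfl this, ← Finset.mul_sum, KK, div_eq_mul_one_div]
    exact mul_le_mul_of_nonneg_left (geom_le (by positivity) h N) (by positivity)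
  | succ β ih =>
    intro j hj h
    have hxj : x ^ j < 1 := pow_lt_one₀ hx hx1 (by omega)
    have hz : 0 < 1 - x ^ j := by linarith
    have e : ∀ i ∈ Finset.range N, x ^ (j * (m + 1 + i)) * ss b m x (β + 1) i =
        x ^ (j * (m + 1)) * (x ^ j) ^ i + x ^ (j * (m + 1 + i)) *
          ∑ q ∈ Finset.range i, ((b : ℝ) - 1) * x ^ (m + 1 + q) * ss b m x β q := by
      intro i _
      rw [ss_eq hb]; ring
    rw [Finset.sum_congr rfl e, Finset.sum_add_distrib, ← Finset.mul_sum, KK]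
    apply add_le_add
    · rw [div_eq_mul_one_div]
      exact mul_le_mul_of_nonneg_left (geom_le (by positivity) hxj N) (by positivity)
    · refine (swap_le (m + 1) j _ x hb1 hx hxj _ (hss β) N).trans ?_
      apply mul_le_mul_of_nonneg_left
      · apply ih (j + 1) (by omega)
        rwa [show j + 1 + β = j + (β + 1) by ring]
      · positivity

noncomputable def PP (b y : ℝ) (v : ℕ) : ℝ := ∏ i ∈ Finset.range v, (y * (b - 1)) / (y ^ (i + 1) - 1)

lemma PP_pos {b y : ℝ} (hb : 1 < b) (hy : 1 < y) (v : ℕ) : 0 < PP b y v := by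
  apply Finset.prod_pos
  intro i _
  have : 1 < y ^ (i + 1) := one_lt_pow₀ hy (by omega)
  have h1 : 0 < b - 1 := by linarith
  have h2 : 0 < y ^ (i + 1) - 1 := by linarith
  positivity

lemma KK_le {b y : ℝ} (hb : 1 < b) (hy : 1 < y) (n : ℕ) (β : ℕ) : ∀ j, 1 ≤ j →
    b < y ^ (j + 1 + β) →
    PP b y j / y ^ j * KK b y⁻¹ n β (j + 1) ≤ (y⁻¹) ^ (2 * n) *
      (1 / (b - 1) * ∑ v ∈ Finset.Ico (j + 1) (j + 1 + β), PP b y v +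
        y / (y ^ (j + 1 + β) - b) * PP b y (j + β)) := by
  have hy0 : 0 < y := by linarith
  have hb1 : 0 < b - 1 := by linarith
  have hpow : ∀ j, 1 ≤ j → (y⁻¹) ^ ((j + 1) * n) ≤ (y⁻¹) ^ (2 * n) := by
    intro j hj
    apply pow_le_pow_of_le_one (by positivity) (inv_le_one_of_one_le₀ hy.le)
    nlinarith
  induction β with
  | zero =>
    intro j hj h
    have hP := PP_pos hb hy j
    have h' : b < y ^ (j + 1) := h
    have hd : 0 < y ^ (j + 1) - b := by linarith
    have e : PP b y j / y ^ j * KK b y⁻¹ n 0 (j + 1) =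
        (y⁻¹) ^ ((j + 1) * n) * (y / (y ^ (j + 1) - b) * PP b y j) := by
      rw [KK]
      have : 1 - b * y⁻¹ ^ (j + 1) = (y ^ (j + 1) - b) / y ^ (j + 1) := by
        rw [inv_pow]; field_simp
      rw [this, pow_succ y j] at *
      field_simp
    rw [e]
    simp only [add_zero, Finset.Ico_self, Finset.sum_empty, mul_zero, zero_add]
    exact mul_le_mul_of_nonneg_right (hpow j hj) (by positivity)
  | succ β ih =>
    intro j hj h
    have hP := PP_pos hb hy (j + 1)
    have h1 : 1 < y ^ (j + 1) := one_lt_pow₀ hy (by omega)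
    have hd : 0 < y ^ (j + 1) - 1 := by linarith
    have hPs : PP b y (j + 1) = PP b y j * ((y * (b - 1)) / (y ^ (j + 1) - 1)) := by
      rw [PP, Finset.prod_range_succ, ← PP]
    have e : PP b y j / y ^ j * KK b y⁻¹ n (β + 1) (j + 1) =
        (y⁻¹) ^ ((j + 1) * n) * (1 / (b - 1) * PP b y (j + 1)) +
          PP b y (j + 1) / y ^ (j + 1) * KK b y⁻¹ n β (j + 1 + 1) := by
      rw [KK, hPs]
      have : 1 - y⁻¹ ^ (j + 1) = (y ^ (j + 1) - 1) / y ^ (j + 1) := by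
        rw [inv_pow]; field_simp
      have h3 : y⁻¹ ^ (j + 1) = 1 / y ^ (j + 1) := by rw [inv_pow, one_div]
      rw [this, h3, pow_succ y j] at *
      generalize y⁻¹ ^ ((j + 1) * n) = w
      field_simp
    rw [e, Finset.sum_eq_sum_Ico_succ_bot (by omega)]
    have i1 := ih (j + 1) (by omega) (by rwa [show j + 1 + 1 + β = j + 1 + (β + 1) by ring])
    have i2 : (y⁻¹) ^ ((j + 1) * n) * (1 / (b - 1) * PP b y (j + 1)) ≤
      (y⁻¹) ^ (2 * n) * (1 / (b - 1) * PP b y (j + 1)) :=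
      mul_le_mul_of_nonneg_right (hpow j hj) (by positivity)
    rw [show j + 1 + 1 + β = j + 1 + (β + 1) by ring, show j + 1 + β = j + (β + 1) by ring] at i1
    refine (add_le_add i2 i1).trans (le_of_eq ?_)
    ring

lemma A2_eq (b β : ℕ) (hb : 2 ≤ b) (lam : ℝ) :
    A2 b (β + 2) lam = 1 / ((b : ℝ) - 1) * ∑ v ∈ Finset.Ico 2 (2 + β), PP b ((b : ℝ) ^ lam) v +
        (b : ℝ) ^ lam / (((b : ℝ) ^ lam) ^ (2 + β) - b) * PP b ((b : ℝ) ^ lam) (1 + β) := by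
  have hp : ∀ i : ℕ, (b : ℝ) ^ (lam * i) = ((b : ℝ) ^ lam) ^ i := by
    intro i
    rw [Real.rpow_mul (by positivity), Real.rpow_natCast]
  have hP : ∀ v : ℕ, ∏ i ∈ Finset.Icc 1 v,
      ((b : ℝ) ^ lam * ((b : ℝ) - 1)) / ((b : ℝ) ^ (lam * i) - 1) = PP b ((b : ℝ) ^ lam) v := by
    intro v
    simp only [hp]
    induction v with
    | zero => simp [PP]
    | succ v ih =>
      rw [Finset.prod_Icc_succ_top (by omega), ih]
      rw [PP, PP, Finset.prod_range_succ]
  unfold A2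
  simp only [hP]
  rw [hp, show β + 2 - 1 = 1 + β by omega, show β + 2 = 2 + β by omega]
  have : Finset.Icc 2 (1 + β) = Finset.Ico 2 (2 + β) := by
    ext i; simp only [Finset.mem_Icc, Finset.mem_Ico]; omega
  rw [this]

lemma es_bound (b β m : ℕ) (hb : 2 ≤ b) (lam : ℝ) (hlam : 1 / ((β + 2 : ℕ) : ℝ) < lam) (N : ℕ) :
    es b m (((b : ℝ) ^ lam)⁻¹) (β + 2) N ≤
      A2 b (β + 2) lam / (b : ℝ) ^ (2 * lam * (m + 1 : ℕ)) := by
  have hbr : (1 : ℝ) < b := by exact_mod_cast hb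
  have hlam0 : 0 < lam := lt_trans (by positivity) hlam
  set y := (b : ℝ) ^ lam with hy
  have hy1 : 1 < y := Real.one_lt_rpow hbr hlam0
  have hy0 : 0 < y := by linarith
  have hx1 : y⁻¹ < 1 := inv_lt_one_of_one_lt₀ hy1
  have hx0 : 0 ≤ y⁻¹ := by positivity
  have hyb : (b : ℝ) < y ^ (1 + 1 + β) := by
    have : y ^ (1 + 1 + β) = (b : ℝ) ^ (lam * ((β + 2 : ℕ) : ℝ)) := by
      rw [Real.rpow_mul (by positivity), Real.rpow_natCast, show 1 + 1 + β = β + 2 by ring]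
    rw [this]
    have h1 : 1 < lam * ((β + 2 : ℕ) : ℝ) := by
      rwa [div_lt_iff₀ (by positivity)] at hlam
    calc (b : ℝ) = (b : ℝ) ^ (1 : ℝ) := (Real.rpow_one _).symm
      _ < _ := Real.rpow_lt_rpow_of_exponent_lt hbr h1
  have hss : ∀ i, 0 ≤ ss b m y⁻¹ β i := by
    intro i
    exact Finset.sum_nonneg fun t _ => by positivity
  have s1 := es_le hb m hx0 (β + 1) N
  have e1 : ∀ i ∈ Finset.range N, y⁻¹ ^ (m + 1 + i) * (ss b m y⁻¹ (β + 1) i - 1) =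
      y⁻¹ ^ (1 * (m + 1 + i)) * ∑ q ∈ Finset.range i,
        ((b : ℝ) - 1) * y⁻¹ ^ (m + 1 + q) * ss b m y⁻¹ β q := by
    intro i _
    rw [ss_eq hb]; ring
  rw [Finset.sum_congr rfl e1] at s1
  have s2 := swap_le (m + 1) 1 ((b : ℝ) - 1) y⁻¹ (by linarith) hx0 (by simpa using hx1) _ hss N
  have s3 := D_le hb m hx0 hx1 N β (1 + 1) (by omega) (by
    rw [inv_pow, ← div_eq_mul_inv, div_lt_one (by positivity)]; exact hyb)
  have s4 := KK_le hbr hy1 (m + 1) β 1 le_rfl hyb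
  have hc : ((b : ℝ) - 1) * y⁻¹ ^ 1 / (1 - y⁻¹ ^ 1) = PP b y 1 / y ^ 1 := by
    have : y - 1 ≠ 0 := by linarith
    have h2 : 1 - y⁻¹ = (y - 1) / y := by field_simp
    simp only [PP, pow_one, Finset.prod_range_one, zero_add]
    rw [h2]
    field_simp
  have hcp : 0 ≤ PP b y 1 / y ^ 1 := by
    have := PP_pos hbr hy1 1
    positivity
  have hfin : A2 b (β + 2) lam / (b : ℝ) ^ (2 * lam * (m + 1 : ℕ)) =
      (y⁻¹) ^ (2 * (m + 1)) *
      (1 / ((b : ℝ) - 1) * ∑ v ∈ Finset.Ico (1 + 1) (1 + 1 + β), PP b y v +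
        y / (y ^ (1 + 1 + β) - b) * PP b y (1 + β)) := by
    rw [A2_eq b β hb, ← hy]
    have : (b : ℝ) ^ (2 * lam * (m + 1 : ℕ)) = y ^ (2 * (m + 1)) := by
      rw [hy, ← Real.rpow_natCast, ← Real.rpow_mul (by positivity)]
      congr 1
      push_cast; ring
    rw [this, inv_pow, div_eq_inv_mul]
  rw [hfin]
  refine s1.trans (s2.trans (le_trans ?_ s4))
  rw [hc]
  exact mul_le_mul_of_nonneg_left s3 hcp

lemma finset_bound (b β m : ℕ) (hb : 2 ≤ b) (lam : ℝ) (hlam : 1 / ((β + 2 : ℕ) : ℝ) < lam)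
    (u : Finset {k : ℕ // k ∈ Eset b ∧ b ^ (m + 1) ∣ k}) :
    ∑ k ∈ u, (b : ℝ) ^ (-(lam * (mualpha b (β + 2) (k.1 / b) : ℝ))) ≤
      A2 b (β + 2) lam / (b : ℝ) ^ (2 * lam * (m + 1 : ℕ)) := by
  obtain ⟨N, hN⟩ : ∃ N, ∀ k ∈ u, k.1 / b ^ (m + 1) < N := by
    refine ⟨u.sup (fun k => k.1 / b ^ (m + 1)) + 1, fun k hk => ?_⟩
    exact Nat.lt_succ_of_le (Finset.le_sup (f := fun k => k.1 / b ^ (m + 1)) hk)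
  refine le_trans ?_ (es_bound b β m hb lam hlam N)
  have hbp : 0 < b ^ (m + 1) := by positivity
  unfold es
  rw [← Finset.sum_filter]
  have hinj : Set.InjOn (fun k : {k : ℕ // k ∈ Eset b ∧ b ^ (m + 1) ∣ k} => k.1 / b ^ (m + 1)) u := by
    intro k _ l _ h
    apply Subtype.ext
    exact (Nat.div_left_inj k.2.2 l.2.2).1 h
  have hval : ∀ k ∈ u, (b : ℝ) ^ (-(lam * (mualpha b (β + 2) (k.1 / b) : ℝ))) =
      (((b : ℝ) ^ lam)⁻¹) ^ mualpha b (β + 2) (b ^ m * (k.1 / b ^ (m + 1))) := by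
    rintro ⟨k, hk, t, rfl⟩ _
    simp only
    rw [Nat.mul_div_cancel_left _ hbp, pow_succ, mul_right_comm,
      Nat.mul_div_cancel _ (by omega), Real.rpow_neg (by positivity),
      Real.rpow_mul (by positivity), Real.rpow_natCast, inv_pow]
  rw [Finset.sum_congr rfl hval,
    ← Finset.sum_image (f := fun t => (((b : ℝ) ^ lam)⁻¹) ^ mualpha b (β + 2) (b ^ m * t)) hinj]
  apply Finset.sum_le_sum_of_subset_of_nonneg
  · intro t ht
    rw [Finset.mem_image] at ht
    obtain ⟨⟨k, hk, t, rfl⟩, hku, rfl⟩ := ht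
    have h1 := hN _ hku
    simp only [Nat.mul_div_cancel_left _ hbp] at h1 ⊢
    have ht0 : t ≠ 0 := by
      rintro rfl
      exact hk.1 (by simp)
    rw [Finset.mem_filter, Finset.mem_range]
    refine ⟨h1.trans (Nat.lt_pow_self (by omega)), ht0, ?_⟩
    have h2 := hk.2
    rw [Nat.digits_base_pow_mul (by omega) (by omega)] at h2
    simpa using h2
  · intro i _ _
    positivity

/-- For every `λ > 1/α`, `Σ_{k ∈ E, bⁿ ∣ k} b^{-λ μ_α(⌊k/b⌋)} ≤ A_{α,b,λ,2} / b^{2λn}`. -/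
theorem sum_Eset_dvd_le (b α n : ℕ) (hb : b.Prime) (hα : 2 ≤ α) (hn : 0 < n) (lam : ℝ)
    (hlam : 1 / (α : ℝ) < lam) :
    Summable (fun k : {k : ℕ // k ∈ Eset b ∧ b ^ n ∣ k} =>
      (b : ℝ) ^ (-(lam * (mualpha b α (k.1 / b) : ℝ)))) ∧
      ∑' k : {k : ℕ // k ∈ Eset b ∧ b ^ n ∣ k},
          (b : ℝ) ^ (-(lam * (mualpha b α (k.1 / b) : ℝ))) ≤
        A2 b α lam / (b : ℝ) ^ (2 * lam * n) := by
  obtain ⟨β, rfl⟩ : ∃ β, α = β + 2 := ⟨α - 2, by omega⟩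
  obtain ⟨m, rfl⟩ : ∃ m, n = m + 1 := ⟨n - 1, by omega⟩
  have h := finset_bound b β m hb.two_le lam hlam
  have hs : Summable (fun k : {k : ℕ // k ∈ Eset b ∧ b ^ (m + 1) ∣ k} =>
      (b : ℝ) ^ (-(lam * (mualpha b (β + 2) (k.1 / b) : ℝ)))) :=
    summable_of_sum_le (fun k => by positivity) h
  exact ⟨hs, hs.tsum_le_of_sum_le h⟩

end QMC
end

section
/- Let b be prime, α ≥ 2 an integer, m ≤ n positive integers, p ∈ 𝔽_b[x] with deg(p) = n, q = (q_1,…,q_s) ∈ 𝔽_b[x]^s, γ_1,…,γ_s ≥ 0 weights and D > 0 a constant. Let 𝒫(q,p) = {z_0,…,z_{b^m−1}} ⊆ G^s be the higher order polynomial lattice point set. Then B_α(q,p) = −1 + (1/b^m) Σ_{h=0}^{b^m−1} ∏_{j=1}^{s} [ 1 + γ_j^{1/2} D^{1/2} χ_b(Φ_b(z_{h,j})) ], where χ_b(z) = Σ_{k=1}^{∞} b^{−μ_α(k)} W_k(z). -/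
namespace QMC

/-- the `k`-th character `W_k` on `G = (ℤ/bℤ)^ℕ`, where `z i = ζ_{i+1}`. -/
noncomputable def W (b k : ℕ) (z : ℕ → ZMod b) : ℂ :=
  Complex.exp (2 * Real.pi * Complex.I / b) ^
    ∑ i ∈ Finset.range (k + 1), digit b k i * (z i).val

/-- `χ_b(z) = Σ_{k ≥ 1} b^{-μ_α(k)} W_k(z)`. -/
noncomputable def chi (b α : ℕ) (z : ℕ → ZMod b) : ℂ :=
  ∑' k : ℕ, ((b : ℂ) ^ mualpha b α (k + 1))⁻¹ * W b (k + 1) z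

/-- the `b`-adic tent transformation `Φ_b : G → G`. -/
def tent (b : ℕ) (z : ℕ → ZMod b) : ℕ → ZMod b := fun i => z (i + 1) - z 0

/-- the polynomial over `𝔽_b` whose coefficients are the `b`-adic digits of `h`. -/
noncomputable def natPoly (b h : ℕ) : Polynomial (ZMod b) :=
  ∑ i ∈ Finset.range (h + 1), Polynomial.C ((digit b h i : ℕ) : ZMod b) * Polynomial.X ^ i

/-- the truncated polynomial `tr_n(k)(x) = κ₀ + κ₁ x + ⋯ + κ_{n-1} x^{n-1}`. -/
noncomputable def trunc (b n k : ℕ) : Polynomial (ZMod b) :=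
  ∑ i ∈ Finset.range n, Polynomial.C ((digit b k i : ℕ) : ZMod b) * Polynomial.X ^ i

/-- the point `v_n(h q / p) ∈ G` of a higher order polynomial lattice point set. -/
noncomputable def hoPoint (b : ℕ) [Fact b.Prime] (p q : Polynomial (ZMod b)) (n h : ℕ) :
    ℕ → ZMod b := fun i =>
  if i < n then ((Polynomial.X ^ n * natPoly b h * q) / p).coeff (n - (i + 1)) else 0

/-- the quality criterion `B_α((q_1,…,q_τ), p)`. -/
noncomputable def Bcrit (b α m n : ℕ) [Fact b.Prime] (γ : ℕ → ℝ) (D : ℝ)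
    (p : Polynomial (ZMod b)) (τ : ℕ) (q : ℕ → Polynomial (ZMod b)) : ℝ :=
  ∑ u ∈ (Finset.range τ).powerset.filter (fun u => u.Nonempty),
    Real.sqrt (∏ j ∈ u, γ j) * Real.sqrt D ^ u.card *
      ∑' f : {f : ℕ → ℕ // (∀ j ∈ u, f j ∈ Eset b) ∧ (∀ j ∉ u, f j = 0) ∧
          ((∑ j ∈ Finset.range τ, trunc b n (f j) * q j) % p).degree <
            ((n - m : ℕ) : WithBot ℕ)},
        ((b : ℝ) ^ ∑ j ∈ u, mualpha b α (f.1 j / b))⁻¹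

/-! ### digits and characters -/

lemma digit_eq_zero {b k i : ℕ} (h : k < b ^ i) : digit b k i = 0 := by
  simp [digit, Nat.div_eq_of_lt h]

lemma digit_zero (b k : ℕ) : digit b k 0 = k % b := by simp [digit]

lemma digit_succ (b k i : ℕ) : digit b k (i + 1) = digit b (k / b) i := by
  simp [digit, pow_succ', Nat.div_div_eq_div_mul]

lemma sum_digit_extend {b : ℕ} (hb : 1 < b) {M : Type*} [AddCommMonoid M] {k N : ℕ}
    (hN : k < b ^ N) (F : ℕ → ℕ → M) (hF : ∀ i, F i 0 = 0) :
    ∑ i ∈ Finset.range (k + 1), F i (digit b k i) = ∑ i ∈ Finset.range N, F i (digit b k i) := by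
  have key : ∀ N, k < b ^ N → ∀ N', N ≤ N' →
      ∑ i ∈ Finset.range N, F i (digit b k i) = ∑ i ∈ Finset.range N', F i (digit b k i) := by
    intro N hN N' hNN
    apply Finset.sum_subset
    · simpa using hNN
    · intro i _ hi
      have hi : N ≤ i := by simpa using hi
      rw [digit_eq_zero (hN.trans_le (Nat.pow_le_pow_right (by omega) hi)), hF]
  have h1 : k < b ^ (k + 1) := (Nat.lt_succ_self k).trans (Nat.lt_pow_self hb)
  rw [key _ h1 (max (k + 1) N) (le_max_left _ _), key _ hN (max (k + 1) N) (le_max_right _ _)]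

section
variable {b : ℕ} [hbp : Fact b.Prime]

lemma W_eq (k : ℕ) (z : ℕ → ZMod b) :
    W b k z = ZMod.stdAddChar (∑ i ∈ Finset.range (k + 1), (digit b k i : ZMod b) * z i) := by
  have : (∑ i ∈ Finset.range (k + 1), (digit b k i : ZMod b) * z i) =
      (((∑ i ∈ Finset.range (k + 1), digit b k i * (z i).val : ℕ) : ℤ) : ZMod b) := by
    push_cast
    simp
  rw [this, ZMod.stdAddChar_coe, W, ← Complex.exp_nat_mul]
  congr 1
  push_cast
  ring

lemma W_eq' {k N : ℕ} (hN : k < b ^ N) (z : ℕ → ZMod b) :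
    W b k z = ZMod.stdAddChar (∑ i ∈ Finset.range N, (digit b k i : ZMod b) * z i) := by
  rw [W_eq, sum_digit_extend hbp.out.one_lt hN (fun i d => (d : ZMod b) * z i) (by simp)]

lemma W_eq_of_vanish {k n : ℕ} (z : ℕ → ZMod b) (hz : ∀ i, n ≤ i → z i = 0) :
    W b k z = ZMod.stdAddChar (∑ i ∈ Finset.range n, (digit b k i : ZMod b) * z i) := by
  have h1 : k < b ^ (max k n) := (Nat.lt_pow_self hbp.out.one_lt).trans_le
    (Nat.pow_le_pow_right hbp.out.pos (le_max_left _ _))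
  rw [W_eq' h1]
  congr 1
  symm
  apply Finset.sum_subset
  · simp
  · intro i _ hi
    rw [hz i (by simpa using hi), mul_zero]

/-- the element of `E` attached to `k`. -/
noncomputable def enc (b k : ℕ) : ℕ :=
  b * k + (-(((Nat.digits b k).sum : ℕ) : ZMod b)).val

lemma enc_div (k : ℕ) : enc b k / b = k := by
  unfold enc
  have := ZMod.val_lt (-(((Nat.digits b k).sum : ℕ) : ZMod b))
  rw [Nat.mul_add_div hbp.out.pos, Nat.div_eq_of_lt this, add_zero]

lemma enc_mod (k : ℕ) : enc b k % b = (-(((Nat.digits b k).sum : ℕ) : ZMod b)).val := by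
  unfold enc
  have := ZMod.val_lt (-(((Nat.digits b k).sum : ℕ) : ZMod b))
  rw [Nat.mul_add_mod, Nat.mod_eq_of_lt this]

lemma enc_inj : Function.Injective (enc b) := by
  intro x y h
  rw [← enc_div (b := b) x, h, enc_div]

lemma digits_sum_eq (k : ℕ) (hk : k ≠ 0) :
    (Nat.digits b k).sum = k % b + (Nat.digits b (k / b)).sum := by
  rw [Nat.digits_def' hbp.out.one_lt (Nat.pos_of_ne_zero hk)]
  simp

lemma enc_mem {k : ℕ} (hk : k ≠ 0) : enc b k ∈ Eset b := by
  have h0 : enc b k ≠ 0 := by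
    intro h
    have := enc_div (b := b) k
    rw [h] at this
    simp at this
    exact hk this.symm
  refine ⟨h0, ?_⟩
  rw [digits_sum_eq _ h0, enc_div, enc_mod, ← ZMod.natCast_eq_zero_iff]
  push_cast
  simp

lemma enc_of_mem {k : ℕ} (hk : k ∈ Eset b) : k / b ≠ 0 ∧ enc b (k / b) = k := by
  obtain ⟨h0, hd⟩ := hk
  rw [digits_sum_eq _ h0, ← ZMod.natCast_eq_zero_iff] at hd
  push_cast at hd
  have hmod : (-(((Nat.digits b (k / b)).sum : ℕ) : ZMod b)).val = k % b := by
    have h1 : (-(((Nat.digits b (k / b)).sum : ℕ) : ZMod b)) = ((k % b : ℕ) : ZMod b) := by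
      push_cast
      linear_combination -hd
    rw [h1, ZMod.val_natCast, Nat.mod_mod]
  constructor
  · intro h
    rw [h] at hmod
    simp at hmod
    have := Nat.div_add_mod k b
    rw [h] at this
    have h3 : k % b = 0 := hmod.symm
    simp [h3] at this
    omega
  · unfold enc
    rw [hmod, Nat.div_add_mod]

lemma digits_sum_digit (N : ℕ) : ∀ k, k < b ^ N →
    (Nat.digits b k).sum = ∑ i ∈ Finset.range N, digit b k i := by
  induction N with
  | zero => intro k hk; simp at hk; simp [hk]
  | succ N ih =>
    intro k hk
    rcases eq_or_ne k 0 with rfl | h0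
    · simp [digit]
    rw [digits_sum_eq k h0, Finset.sum_range_succ', digit_zero, add_comm]
    simp only [digit_succ]
    rw [ih]
    rw [Nat.div_lt_iff_lt_mul hbp.out.pos, ← pow_succ]
    exact hk

lemma W_tent (k : ℕ) (z : ℕ → ZMod b) : W b k (tent b z) = W b (enc b k) z := by
  have hk : k < b ^ k := Nat.lt_pow_self hbp.out.one_lt
  have hek : enc b k < b ^ (k + 1) := by
    rw [pow_succ, ← Nat.div_lt_iff_lt_mul hbp.out.pos, enc_div]
    exact hk
  rw [W_eq' hk, W_eq' hek, Finset.sum_range_succ', digit_zero, enc_mod]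
  simp only [digit_succ, enc_div, tent, mul_sub, Finset.sum_sub_distrib, digits_sum_digit k k hk,
    ZMod.natCast_val, ZMod.cast_id, ← Finset.sum_mul]
  congr 1
  push_cast
  ring

/-! ### orthogonality -/

lemma char_sum {ι : Type*} (u : Finset ι) (F : ι → ZMod b) :
    (ZMod.stdAddChar (∑ j ∈ u, F j) : ℂ) = ∏ j ∈ u, ZMod.stdAddChar (F j) := by
  classical
  induction u using Finset.induction_on with
  | empty => simp
  | insert a s ha ih => rw [Finset.sum_insert ha, Finset.prod_insert ha, AddChar.map_add_eq_mul, ih]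

lemma sum_range_pow_succ {M : Type*} [AddCommMonoid M] (m : ℕ) (F : ℕ → M) :
    ∑ h ∈ Finset.range (b ^ (m + 1)), F h =
      ∑ h ∈ Finset.range (b ^ m), ∑ x : ZMod b, F (b * h + x.val) := by
  rw [← Finset.sum_product']
  symm
  have hb := hbp.out.pos
  refine Finset.sum_bij' (fun a _ => b * a.1 + a.2.val) (fun h _ => (h / b, (h : ZMod b)))
    ?_ ?_ ?_ ?_ ?_
  · rintro ⟨h, x⟩ ha
    simp only [Finset.mem_product, Finset.mem_range, Finset.mem_univ, and_true] at ha ⊢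
    have := ZMod.val_lt x
    rw [pow_succ, ← Nat.div_lt_iff_lt_mul hb, Nat.mul_add_div hb, Nat.div_eq_of_lt this]
    simpa using ha
  · intro h hh
    simp only [Finset.mem_product, Finset.mem_range, Finset.mem_univ, and_true] at hh ⊢
    rwa [Nat.div_lt_iff_lt_mul hb, ← pow_succ]
  · rintro ⟨h, x⟩ ha
    have := ZMod.val_lt x
    simp [Nat.mul_add_div hb, Nat.div_eq_of_lt this]
  · intro h hh
    simp [ZMod.val_natCast, Nat.div_add_mod]
  · intros; rfl

lemma sum_char (m : ℕ) : ∀ c : ℕ → ZMod b,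
    ∑ h ∈ Finset.range (b ^ m),
      (ZMod.stdAddChar (∑ i ∈ Finset.range m, (digit b h i : ZMod b) * c i) : ℂ) =
    ∏ i ∈ Finset.range m, ∑ x : ZMod b, (ZMod.stdAddChar (x * c i) : ℂ) := by
  induction m with
  | zero => intro c; simp
  | succ m ih =>
    intro c
    rw [sum_range_pow_succ, Finset.prod_range_succ', ← ih, Finset.sum_mul]
    refine Finset.sum_congr rfl fun h _ => ?_
    rw [Finset.mul_sum]
    refine Finset.sum_congr rfl fun x _ => ?_
    have := ZMod.val_lt x
    rw [Finset.sum_range_succ', AddChar.map_add_eq_mul]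
    simp [digit_succ, digit_zero, Nat.mul_add_div hbp.out.pos, Nat.div_eq_of_lt this]

lemma sum_char' (m : ℕ) (c : ℕ → ZMod b) [Decidable (∀ i < m, c i = 0)] :
    ((b : ℂ) ^ m)⁻¹ * ∑ h ∈ Finset.range (b ^ m),
      (ZMod.stdAddChar (∑ i ∈ Finset.range m, (digit b h i : ZMod b) * c i) : ℂ) =
    if ∀ i < m, c i = 0 then 1 else 0 := by
  have hb : (b : ℂ) ≠ 0 := by exact_mod_cast hbp.out.ne_zero
  rw [sum_char]
  simp only [AddChar.sum_mulShift _ (ZMod.isPrimitive_stdAddChar b), ZMod.card]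
  split_ifs with h
  · rw [Finset.prod_congr rfl (g := fun _ => (b : ℂ))]
    · simp [hb]
    · intro i hi
      simp [h i (by simpa using hi)]
  · push Not at h
    obtain ⟨i, hi, hc⟩ := h
    rw [Finset.prod_eq_zero (Finset.mem_range.2 hi), mul_zero]
    simp [hc]

/-! ### polynomials -/

open Polynomial in
/-- the coefficient of `x⁻¹` in `B / p`. -/
noncomputable def lam (p : Polynomial (ZMod b)) (n : ℕ) : Polynomial (ZMod b) →ₗ[ZMod b] ZMod b :=
  p.leadingCoeff⁻¹ • (lcoeff (ZMod b) (n - 1)).comp (modByMonicHom (p * C p.leadingCoeff⁻¹))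

lemma lam_apply (p B : Polynomial (ZMod b)) (n : ℕ) :
    lam p n B = p.leadingCoeff⁻¹ * (B % p).coeff (n - 1) := by
  simp [lam, Polynomial.mod_def]

open Polynomial in
lemma coeff_div {p : Polynomial (ZMod b)} {n : ℕ} (hn : 0 < n)
    (hpdeg : p.degree = (n : WithBot ℕ)) (B : Polynomial (ZMod b)) (t : ℕ) :
    (X ^ (t + 1) * B / p).coeff t = lam p n B := by
  have hp0 : p ≠ 0 := by rintro rfl; simp at hpdeg
  have hnat : p.natDegree = n := natDegree_eq_of_degree_eq_some hpdeg
  have hlc : p.leadingCoeff ≠ 0 := leadingCoeff_ne_zero.2 hp0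
  rw [lam_apply]
  set R := B % p with hR
  set Q := B / p
  have hB : p * Q + R = B := EuclideanDomain.div_add_mod B p
  have hRdeg : R.degree < (n : WithBot ℕ) := hpdeg ▸ degree_mod_lt B hp0
  set A := X ^ (t + 1) * B
  -- quotient
  set Q2 := A / p - X ^ (t + 1) * Q with hQ2
  have hA : p * (A / p) + A % p = A := EuclideanDomain.div_add_mod A p
  have hAdeg : (A % p).degree < (n : WithBot ℕ) := hpdeg ▸ degree_mod_lt A hp0
  have e1 : p * Q2 = X ^ (t + 1) * R - A % p := by
    have : A = X ^ (t + 1) * (p * Q + R) := by rw [hB]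
    rw [hQ2]
    linear_combination hA + this
  have hcoeff : ∀ k, n ≤ k → (p * Q2).coeff (k + t) = (X ^ (t + 1) * R).coeff (k + t) := by
    intro k hk
    rw [e1, coeff_sub, coeff_eq_zero_of_degree_lt (p := A % p), sub_zero]
    exact hAdeg.trans_le (by exact_mod_cast (by omega))
  have hQ2deg : Q2.natDegree ≤ t := by
    rcases eq_or_ne Q2 0 with h | h
    · simp [h]
    by_contra hlt
    have h1 : (p * Q2).natDegree = n + Q2.natDegree := by rw [natDegree_mul hp0 h, hnat]
    have h2 : (p * Q2).coeff (p * Q2).natDegree ≠ 0 := by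
      rw [coeff_natDegree]
      exact leadingCoeff_ne_zero.2 (mul_ne_zero hp0 h)
    apply h2
    have h3 : (p * Q2).natDegree = (n + Q2.natDegree - t) + t := by omega
    rw [h3, hcoeff _ (by omega)]
    have h4 : n + Q2.natDegree - t + t = (n + (Q2.natDegree - t - 1)) + (t + 1) := by omega
    rw [h4, coeff_X_pow_mul]
    exact coeff_eq_zero_of_degree_lt (hRdeg.trans_le (by exact_mod_cast (by omega)))
  have h5 : (p * Q2).coeff (n + t) = p.coeff n * Q2.coeff t :=
    coeff_mul_add_eq_of_natDegree_le hnat.le hQ2deg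
  have h6 : (A / p).coeff t = Q2.coeff t := by
    rw [hQ2, coeff_sub, coeff_X_pow_mul']
    simp
  have h7 : p.coeff n = p.leadingCoeff := by rw [leadingCoeff, hnat]
  rw [hcoeff n le_rfl, h7, show n + t = (n - 1) + (t + 1) by omega, coeff_X_pow_mul] at h5
  rw [h6, h5, inv_mul_cancel_left₀ hlc]

open Polynomial in
lemma lam_iff {p : Polynomial (ZMod b)} {m n : ℕ} (hm : 0 < m) (hmn : m ≤ n)
    (hpdeg : p.degree = (n : WithBot ℕ)) (A : Polynomial (ZMod b)) :
    (∀ i < m, lam p n (X ^ i * A) = 0) ↔ (A % p).degree < ((n - m : ℕ) : WithBot ℕ) := by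
  have hp0 : p ≠ 0 := by rintro rfl; simp at hpdeg
  have hlc : p.leadingCoeff ≠ 0 := leadingCoeff_ne_zero.2 hp0
  have hadeg : (A % p).degree < (n : WithBot ℕ) := hpdeg ▸ degree_mod_lt A hp0
  set a := A % p with ha
  have hred : ∀ i, X ^ i * A % p = X ^ i * a % p := by
    intro i
    rw [mul_mod, mul_mod (X ^ i) a, ha, (mod_eq_self_iff hp0).2 (degree_mod_lt A hp0)]
  have hsm : ∀ i d : ℕ, a.degree < (d : WithBot ℕ) → i + d ≤ n → X ^ i * A % p = X ^ i * a := by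
    intro i d hd hid
    rw [hred, mod_eq_self_iff hp0, hpdeg]
    refine lt_of_lt_of_le ?_ (Nat.cast_le.2 hid)
    rw [degree_mul, degree_X_pow, Nat.cast_add]
    exact WithBot.add_lt_add_left (WithBot.coe_ne_bot) hd
  simp only [lam_apply, mul_eq_zero, inv_eq_zero, hlc, false_or]
  constructor
  · intro h
    by_contra hcon
    have ha0 : a ≠ 0 := by
      intro h0
      apply hcon
      rw [h0, degree_zero]
      exact WithBot.bot_lt_coe _
    rw [degree_eq_natDegree ha0] at hcon hadeg
    have h1 : n - m ≤ a.natDegree := by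
      by_contra h'; exact hcon (by exact_mod_cast (not_le.1 h'))
    have h2 : a.natDegree < n := by exact_mod_cast hadeg
    have h3 := h (n - 1 - a.natDegree) (by omega)
    have hd1 : a.degree < ((a.natDegree + 1 : ℕ) : WithBot ℕ) := by
      rw [degree_eq_natDegree ha0]
      exact_mod_cast Nat.lt_succ_self _
    rw [hsm _ (a.natDegree + 1) hd1 (by omega)] at h3
    have h4 : n - 1 = a.natDegree + (n - 1 - a.natDegree) := by omega
    have h5 : (X ^ (n - 1 - a.natDegree) * a).coeff (a.natDegree + (n - 1 - a.natDegree)) = 0 := by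
      rw [← h4]
      exact h3
    rw [coeff_X_pow_mul] at h5
    exact ha0 (leadingCoeff_eq_zero.1 h5)
  · intro h i hi
    rw [hsm i (n - m) h (by omega), show n - 1 = (n - 1 - i) + i by omega, coeff_X_pow_mul]
    exact coeff_eq_zero_of_degree_lt (h.trans_le (by exact_mod_cast (by omega)))

open Polynomial in
lemma hoPoint_eq {p : Polynomial (ZMod b)} {n : ℕ} (hpdeg : p.degree = (n : WithBot ℕ))
    (q : Polynomial (ZMod b)) (h i : ℕ) (hi : i < n) :
    hoPoint b p q n h i = lam p n (X ^ i * (natPoly b h * q)) := by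
  rw [hoPoint, if_pos hi, ← coeff_div (by omega) hpdeg _ (n - (i + 1))]
  congr 2
  rw [← mul_assoc, ← pow_add, show n - (i + 1) + 1 + i = n by omega, mul_assoc]

open Polynomial in
lemma natPoly_eq {m h : ℕ} (hh : h < b ^ m) :
    natPoly b h = ∑ i ∈ Finset.range m, C (digit b h i : ZMod b) * X ^ i := by
  rw [natPoly]
  exact sum_digit_extend hbp.out.one_lt hh (fun i d => C (d : ZMod b) * X ^ i) (by simp)

open Polynomial in
lemma W_hoPoint {p : Polynomial (ZMod b)} {n : ℕ} (hpdeg : p.degree = (n : WithBot ℕ))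
    (q : Polynomial (ZMod b)) (h k : ℕ) :
    W b k (hoPoint b p q n h) =
      ZMod.stdAddChar (lam p n (natPoly b h * (trunc b n k * q))) := by
  rw [W_eq_of_vanish (n := n) _ (fun i hi => by simp [hoPoint, not_lt.2 hi])]
  congr 1
  rw [trunc, Finset.sum_mul, Finset.mul_sum, map_sum]
  refine Finset.sum_congr rfl fun i hi => ?_
  rw [hoPoint_eq hpdeg q h i (Finset.mem_range.1 hi), ← smul_eq_mul, ← map_smul, smul_eq_C_mul]
  congr 1
  ring

open Polynomial in
lemma average_W {p : Polynomial (ZMod b)} {m n : ℕ} (hm : 0 < m) (hmn : m ≤ n)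
    (hpdeg : p.degree = (n : WithBot ℕ)) (q : ℕ → Polynomial (ZMod b)) (u : Finset ℕ) (f : ℕ → ℕ)
    [Decidable (((∑ j ∈ u, trunc b n (f j) * q j) % p).degree < ((n - m : ℕ) : WithBot ℕ))] :
    ((b : ℂ) ^ m)⁻¹ * ∑ h ∈ Finset.range (b ^ m), ∏ j ∈ u, W b (f j) (hoPoint b p (q j) n h) =
      if ((∑ j ∈ u, trunc b n (f j) * q j) % p).degree < ((n - m : ℕ) : WithBot ℕ)
      then 1 else 0 := by
  classical
  rw [if_congr (lam_iff hm hmn hpdeg _).symm rfl rfl, ← sum_char']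
  congr 1
  refine Finset.sum_congr rfl fun h hh => ?_
  simp only [W_hoPoint hpdeg]
  rw [← char_sum, ← map_sum, ← Finset.mul_sum, natPoly_eq (Finset.mem_range.1 hh),
    Finset.sum_mul, map_sum]
  congr 1
  refine Finset.sum_congr rfl fun i hi => ?_
  rw [mul_assoc, ← smul_eq_C_mul, map_smul, smul_eq_mul]

end
/-! ### infinite sums -/

lemma pi_prod_fin (n : ℕ) : ∀ (a : Fin n → ℕ → ℂ) (_ : ∀ j, Summable fun k => ‖a j k‖),
    Summable (fun g : Fin n → ℕ => ‖∏ j, a j (g j)‖) ∧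
      ∑' g : Fin n → ℕ, ∏ j, a j (g j) = ∏ j, ∑' k, a j k := by
  induction n with
  | zero =>
    intro a _
    exact ⟨(hasSum_fintype _).summable, by simp⟩
  | succ n ih =>
    intro a ha
    obtain ⟨h1, h2⟩ := ih (fun j => a j.succ) (fun j => ha _)
    let e := Fin.consEquiv (fun _ : Fin (n + 1) => ℕ)
    constructor
    · rw [← e.summable_iff]
      refine ((ha 0).mul_norm h1).congr fun x => ?_
      simp [e, Fin.prod_univ_succ, Fin.consEquiv]
    · rw [← e.tsum_eq, Fin.prod_univ_succ, ← h2, tsum_mul_tsum_of_summable_norm (ha 0) h1]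
      refine tsum_congr fun x => ?_
      simp [e, Fin.prod_univ_succ, Fin.consEquiv]

lemma pi_prod {ι : Type*} [Fintype ι] (a : ι → ℕ → ℂ) (ha : ∀ j, Summable fun k => ‖a j k‖) :
    Summable (fun g : ι → ℕ => ∏ j, a j (g j)) ∧
      ∑' g : ι → ℕ, ∏ j, a j (g j) = ∏ j, ∑' k, a j k := by
  let e := Fintype.equivFin ι
  obtain ⟨h1, h2⟩ := pi_prod_fin _ (fun j => a (e.symm j)) (fun j => ha _)
  let E : (Fin (Fintype.card ι) → ℕ) ≃ (ι → ℕ) := e.symm.arrowCongr (Equiv.refl ℕ)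
  have key : ∀ g : Fin (Fintype.card ι) → ℕ,
      ∏ j, a j (E g j) = ∏ j, a (e.symm j) (g j) := by
    intro g
    rw [← e.symm.prod_comp]
    simp [E, Equiv.arrowCongr]
  constructor
  · rw [← E.summable_iff]
    exact h1.of_norm.congr fun g => (key g).symm
  · rw [← E.tsum_eq, ← e.symm.prod_comp, ← h2]
    exact tsum_congr key

lemma take_sum_one (l : List ℕ) (hl : l.Pairwise (· > ·)) (α x : ℕ) (hα : 1 ≤ α) (hx : x ∈ l) :
    x + 1 ≤ ((l.take α).map (· + 1)).sum := by
  obtain ⟨α, rfl⟩ : ∃ β, α = β + 1 := ⟨α - 1, by omega⟩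
  cases l with
  | nil => simp at hx
  | cons u l =>
    simp only [List.take_succ_cons, List.map_cons, List.sum_cons]
    have : x ≤ u := by
      rcases List.mem_cons.1 hx with h | h
      · exact h.le
      · exact (List.rel_of_pairwise_cons hl h).le
    omega

lemma take_sum_two (l : List ℕ) (hl : l.Pairwise (· > ·)) (α x y : ℕ) (hα : 2 ≤ α) (hx : x ∈ l)
    (hy : y ∈ l) (hxy : y < x) :
    (x + 1) + (y + 1) ≤ ((l.take α).map (· + 1)).sum := by
  obtain ⟨α, rfl⟩ : ∃ β, α = β + 1 := ⟨α - 1, by omega⟩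
  cases l with
  | nil => simp at hx
  | cons u l =>
    simp only [List.take_succ_cons, List.map_cons, List.sum_cons]
    have hxu : x ≤ u := by
      rcases List.mem_cons.1 hx with h | h
      · exact h.le
      · exact (List.rel_of_pairwise_cons hl h).le
    have hyl : y ∈ l := by
      rcases List.mem_cons.1 hy with h | h
      · omega
      · exact h
    have := take_sum_one l (List.pairwise_cons.1 hl).2 α y (by omega) hyl
    omega

lemma sort_desc (s : Finset ℕ) : ((s.sort (· ≤ ·)).reverse).Pairwise (· > ·) := by
  rw [List.pairwise_reverse]
  exact (s.sortedLT_sort).pairwise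

section
variable {b : ℕ} [hbp : Fact b.Prime]

lemma mem_digit_list {k i : ℕ} (h : digit b k i ≠ 0) :
    i ∈ (((Finset.range (k + 1)).filter fun i => digit b k i ≠ 0).sort (· ≤ ·)).reverse := by
  simp only [List.mem_reverse, Finset.mem_sort, Finset.mem_filter, Finset.mem_range]
  refine ⟨?_, h⟩
  by_contra hlt
  apply h
  apply digit_eq_zero
  exact (show k < i by omega).trans (Nat.lt_pow_self hbp.out.one_lt)

lemma digit_log {k : ℕ} (hk : k ≠ 0) : digit b k (Nat.log b k) ≠ 0 := by
  have h1 := Nat.pow_log_le_self b hk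
  have h2 := Nat.lt_pow_succ_log_self hbp.out.one_lt k
  have hpos : 0 < b ^ Nat.log b k := pow_pos hbp.out.pos _
  rw [digit, Nat.mod_eq_of_lt]
  · have := Nat.div_pos h1 hpos
    omega
  · rw [Nat.div_lt_iff_lt_mul hpos, ← pow_succ']
    exact h2

lemma digit_mod {k a i : ℕ} (hi : i < a) : digit b (k % b ^ a) i = digit b k i := by
  unfold digit
  obtain ⟨c, rfl⟩ : ∃ c, a = i + (c + 1) := ⟨a - i - 1, by omega⟩
  rw [pow_add, Nat.mod_mul_right_div_self, Nat.mod_mod_of_dvd]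
  exact dvd_pow_self b (by omega)

lemma pow_mualpha_ge {α : ℕ} (hα : 2 ≤ α) {k : ℕ} (hk : k ≠ 0) :
    b ^ (Nat.log b k) * (k % b ^ (Nat.log b k) + 1) ≤ b ^ mualpha b α k := by
  have hb := hbp.out.one_lt
  set a := Nat.log b k with ha
  set r := k % b ^ a with hr
  have hra : r < b ^ a := Nat.mod_lt _ (pow_pos hbp.out.pos _)
  have hmem := mem_digit_list (digit_log (b := b) hk)
  rcases eq_or_ne r 0 with h0 | h0
  · rw [h0, zero_add, mul_one]
    refine Nat.pow_le_pow_right hbp.out.pos ?_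
    have := take_sum_one _ (sort_desc _) α _ (by omega) hmem
    unfold mualpha
    omega
  · have hla : Nat.log b r < a := Nat.log_lt_of_lt_pow h0 hra
    have hmem2 : digit b k (Nat.log b r) ≠ 0 := by
      rw [← digit_mod hla]
      exact digit_log h0
    have h1 := take_sum_two _ (sort_desc _) α _ _ hα hmem (mem_digit_list hmem2) hla
    have h2 : r + 1 ≤ b ^ (Nat.log b r + 1) := Nat.lt_pow_succ_log_self hb r
    calc b ^ a * (r + 1) ≤ b ^ a * b ^ (Nat.log b r + 1) := Nat.mul_le_mul_left _ h2
      _ = b ^ (a + (Nat.log b r + 1)) := (pow_add _ _ _).symm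
      _ ≤ _ := by
        refine Nat.pow_le_pow_right hbp.out.pos ?_
        unfold mualpha
        omega

lemma summable_mualpha {α : ℕ} (hα : 2 ≤ α) :
    Summable fun k : ℕ => ((b : ℝ) ^ mualpha b α (k + 1))⁻¹ := by
  have hb := hbp.out.one_lt
  have hbR : (1 : ℝ) < b := by exact_mod_cast hb
  have hs1 : Summable fun a : ℕ => ((b : ℝ) ^ (-(1 / 2) : ℝ)) ^ a :=
    summable_geometric_of_lt_one (by positivity)
      (Real.rpow_lt_one_of_one_lt_of_neg hbR (by norm_num))
  have hs2 : Summable fun r : ℕ => ((r + 1 : ℕ) : ℝ) ^ (-(3 / 2) : ℝ) := by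
    have : Summable fun r : ℕ => (r : ℝ) ^ (-(3 / 2) : ℝ) :=
      Real.summable_nat_rpow.2 (by norm_num)
    exact (summable_nat_add_iff 1).2 this
  have hs3 : Summable fun _ : ZMod b => (1 : ℝ) := (hasSum_fintype _).summable
  have hs := (hs1.mul_of_nonneg hs2 (fun _ => by positivity) (fun _ => by positivity)).mul_of_nonneg
    hs3 (fun _ => by positivity) (fun _ => by positivity)
  let φ : ℕ → (ℕ × ℕ) × ZMod b := fun k =>
    ((Nat.log b (k + 1), (k + 1) % b ^ Nat.log b (k + 1)),
      (digit b (k + 1) (Nat.log b (k + 1)) : ZMod b))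
  have hdig : ∀ k : ℕ, digit b (k + 1) (Nat.log b (k + 1)) = (k + 1) / b ^ Nat.log b (k + 1) := by
    intro k
    have h2 := Nat.lt_pow_succ_log_self hb (k + 1)
    have hpos : 0 < b ^ Nat.log b (k + 1) := pow_pos hbp.out.pos _
    rw [digit, Nat.mod_eq_of_lt]
    rw [Nat.div_lt_iff_lt_mul hpos, ← pow_succ']
    exact h2
  have hφ : Function.Injective φ := by
    intro k l h
    simp only [φ, Prod.mk.injEq] at h
    obtain ⟨⟨h1, h2⟩, h3⟩ := h
    have h4 : digit b (k + 1) (Nat.log b (k + 1)) = digit b (l + 1) (Nat.log b (l + 1)) := by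
      have h5 := (ZMod.natCast_eq_natCast_iff' _ _ _).1 h3
      simpa [digit] using h5
    rw [hdig, hdig] at h4
    have e1 := Nat.div_add_mod (k + 1) (b ^ Nat.log b (k + 1))
    have e2 := Nat.div_add_mod (l + 1) (b ^ Nat.log b (l + 1))
    rw [h4, h2, h1] at e1
    omega
  refine Summable.of_nonneg_of_le (fun k => by positivity) (fun k => ?_) (hs.comp_injective hφ)
  simp only [Function.comp, φ, mul_one]
  set a := Nat.log b (k + 1)
  set r := (k + 1) % b ^ a with hr
  have hra : r + 1 ≤ b ^ a := Nat.mod_lt _ (pow_pos hbp.out.pos _)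
  have hge := pow_mualpha_ge (b := b) hα (Nat.succ_ne_zero k)
  have hgeR : ((b : ℝ) ^ a) * ((r + 1 : ℕ) : ℝ) ≤ (b : ℝ) ^ mualpha b α (k + 1) := by
    exact_mod_cast hge
  have hraR : ((r + 1 : ℕ) : ℝ) ≤ (b : ℝ) ^ a := by exact_mod_cast hra
  have hx : (0 : ℝ) < ((r + 1 : ℕ) : ℝ) := by positivity
  generalize ((r + 1 : ℕ) : ℝ) = x at *
  have hB : (0 : ℝ) < (b : ℝ) ^ a := by positivity
  have e : ((b : ℝ) ^ (-(1 / 2) : ℝ)) ^ a = ((b : ℝ) ^ a) ^ (-(1 / 2) : ℝ) := by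
    rw [← Real.rpow_natCast, ← Real.rpow_natCast, ← Real.rpow_mul (by positivity),
      ← Real.rpow_mul (by positivity), mul_comm]
  rw [e]
  generalize (b : ℝ) ^ a = B at *
  calc ((b : ℝ) ^ mualpha b α (k + 1))⁻¹ ≤ (B * x)⁻¹ := inv_anti₀ (by positivity) hgeR
    _ = B ^ (-(1 / 2) : ℝ) * (B ^ (-(1 / 2) : ℝ) * x⁻¹) := by
      rw [← mul_assoc, ← Real.rpow_add hB, mul_inv]
      norm_num [Real.rpow_neg_one]
    _ ≤ B ^ (-(1 / 2) : ℝ) * (x ^ (-(1 / 2) : ℝ) * x⁻¹) := by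
      gcongr ?_ * (?_ * _)
      exact Real.rpow_le_rpow_of_nonpos hx hraR (by norm_num)
    _ = B ^ (-(1 / 2) : ℝ) * x ^ (-(3 / 2) : ℝ) := by
      rw [← Real.rpow_neg_one x, ← Real.rpow_add hx]
      norm_num

lemma norm_W (k : ℕ) (z : ℕ → ZMod b) : ‖W b k z‖ = 1 := by
  rw [W_eq, ZMod.stdAddChar_apply]
  exact Circle.norm_coe _

end
/-! ### assembling -/

section
variable {b : ℕ} [hbp : Fact b.Prime]

open Classical in
lemma main_term {α m n s : ℕ} (hα : 2 ≤ α) (hm : 0 < m) (hmn : m ≤ n)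
    {p : Polynomial (ZMod b)} (hpdeg : p.degree = (n : WithBot ℕ))
    (q : ℕ → Polynomial (ZMod b)) (u : Finset ℕ) (hu : u ⊆ Finset.range s) :
    ((b : ℂ) ^ m)⁻¹ * ∑ h ∈ Finset.range (b ^ m), ∏ j ∈ u,
      chi b α (tent b (hoPoint b p (q j) n h)) =
    ((∑' f : {f : ℕ → ℕ // (∀ j ∈ u, f j ∈ Eset b) ∧ (∀ j ∉ u, f j = 0) ∧
          ((∑ j ∈ Finset.range s, trunc b n (f j) * q j) % p).degree <
            ((n - m : ℕ) : WithBot ℕ)},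
        ((b : ℝ) ^ ∑ j ∈ u, mualpha b α (f.1 j / b))⁻¹ : ℝ) : ℂ) := by
  -- the terms
  let T : ℕ → ℕ → ℕ → ℂ := fun h j k =>
    ((b : ℂ) ^ mualpha b α (k + 1))⁻¹ * W b (enc b (k + 1)) (hoPoint b p (q j) n h)
  have hT : ∀ h j, Summable fun k => ‖T h j k‖ := by
    intro h j
    refine (summable_mualpha (b := b) hα).congr fun k => ?_
    simp [T, norm_W]
  have hchi : ∀ h j, chi b α (tent b (hoPoint b p (q j) n h)) = ∑' k, T h j k := by
    intro h j
    simp only [chi, T, W_tent]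
  have hprod : ∀ h, ∏ j ∈ u, chi b α (tent b (hoPoint b p (q j) n h)) =
      ∑' g : u → ℕ, ∏ j : u, T h j (g j) := by
    intro h
    rw [(pi_prod (fun j : u => T h j) (fun j => hT h j)).2, ← Finset.prod_coe_sort]
    exact Finset.prod_congr rfl fun j _ => hchi h j
  simp only [hprod]
  rw [← Summable.tsum_finsetSum (fun h _ => (pi_prod (fun j : u => T h j) (fun j => hT h j)).1),
    ← tsum_mul_left]
  let S : Set (ℕ → ℕ) := {f | (∀ j ∈ u, f j ∈ Eset b) ∧ (∀ j ∉ u, f j = 0) ∧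
          ((∑ j ∈ Finset.range s, trunc b n (f j) * q j) % p).degree <
            ((n - m : ℕ) : WithBot ℕ)}
  let F : (ℕ → ℕ) → ℂ := fun f => ((b : ℂ) ^ ∑ j ∈ u, mualpha b α (f j / b))⁻¹
  have hrhs : ((∑' f : {f : ℕ → ℕ // (∀ j ∈ u, f j ∈ Eset b) ∧ (∀ j ∉ u, f j = 0) ∧
          ((∑ j ∈ Finset.range s, trunc b n (f j) * q j) % p).degree <
            ((n - m : ℕ) : WithBot ℕ)},
        ((b : ℝ) ^ ∑ j ∈ u, mualpha b α (f.1 j / b))⁻¹ : ℝ) : ℂ) = ∑' f : ℕ → ℕ, S.indicator F f := by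
    rw [← tsum_subtype S F, Complex.ofReal_tsum]
    refine tsum_congr fun f => ?_
    simp [F]
  rw [hrhs]
  let φ : (u → ℕ) → ℕ → ℕ := fun g j => if hj : j ∈ u then enc b (g ⟨j, hj⟩ + 1) else 0
  have hφin : ∀ g (j : u), φ g j = enc b (g j + 1) := by
    intro g j
    simp [φ]
  have hφout : ∀ g j, j ∉ u → φ g j = 0 := by
    intro g j hj
    simp [φ, hj]
  have hφ : Function.Injective φ := by
    intro g g' h
    funext j
    have := congrFun h j
    rw [hφin, hφin] at this
    have := enc_inj this
    omega
  have hsupp : Function.support (S.indicator F) ⊆ Set.range φ := by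
    intro f hf
    have hfS : f ∈ S := Set.mem_of_indicator_ne_zero hf
    obtain ⟨h1, h2, -⟩ := hfS
    refine ⟨fun j : u => f j / b - 1, ?_⟩
    funext j
    by_cases hj : j ∈ u
    · obtain ⟨h3, h4⟩ := enc_of_mem (h1 j hj)
      have := hφin (fun j : u => f j / b - 1) ⟨j, hj⟩
      simp only at this
      rw [this, Nat.sub_add_cancel (Nat.pos_of_ne_zero h3), h4]
    · exact (hφout (fun j : u => f j / b - 1) j hj).trans (h2 j hj).symm
  rw [← hφ.tsum_eq hsupp]
  refine tsum_congr fun g => ?_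
  -- termwise
  have hsum : ∑ j ∈ Finset.range s, trunc b n (φ g j) * q j = ∑ j ∈ u, trunc b n (φ g j) * q j := by
    symm
    apply Finset.sum_subset hu
    intro j _ hj
    rw [hφout g j hj]
    simp [trunc, digit]
  have hmem : φ g ∈ S ↔ ((∑ j ∈ u, trunc b n (φ g j) * q j) % p).degree <
      ((n - m : ℕ) : WithBot ℕ) := by
    simp only [S, Set.mem_ofPred_eq, hsum]
    refine ⟨fun h => h.2.2, fun h => ⟨?_, hφout g, h⟩⟩
    intro j hj
    have := hφin g ⟨j, hj⟩
    simp only at this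
    rw [this]
    exact enc_mem (Nat.succ_ne_zero _)
  have hF : F (φ g) = ∏ j : u, ((b : ℂ) ^ mualpha b α (g j + 1))⁻¹ := by
    simp only [F]
    rw [← Finset.prod_pow_eq_pow_sum, ← Finset.prod_inv_distrib, ← Finset.prod_coe_sort]
    refine Finset.prod_congr rfl fun j _ => ?_
    rw [hφin, enc_div]
  have hL : ∀ h, ∏ j : u, T h j (g j) =
      F (φ g) * ∏ j ∈ u, W b (φ g j) (hoPoint b p (q j) n h) := by
    intro h
    rw [hF, ← Finset.prod_coe_sort u, ← Finset.prod_mul_distrib]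
    refine Finset.prod_congr rfl fun j _ => ?_
    rw [hφin]
  simp only [hL]
  rw [← Finset.mul_sum, mul_left_comm, average_W hm hmn hpdeg, Set.indicator_apply]
  simp only [hmem]
  split_ifs <;> simp

end

/-- The quality criterion `B_α(q,p)` can be computed as an average over the higher
order polynomial lattice point set:
`B_α(q,p) = -1 + b^{-m} Σ_h ∏_j (1 + γ_j^{1/2} D^{1/2} χ_b(Φ_b(z_{h,j})))`. -/
theorem Bcrit_eq_average (b α m n s : ℕ) [Fact b.Prime] (hα : 2 ≤ α) (hm : 0 < m)
    (hmn : m ≤ n) (hs : 0 < s) (p : Polynomial (ZMod b))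
    (hpdeg : p.degree = (n : WithBot ℕ)) (γ : ℕ → ℝ) (hγ : ∀ j, 0 ≤ γ j)
    (D : ℝ) (hD : 0 < D) (q : ℕ → Polynomial (ZMod b)) :
    (Bcrit b α m n γ D p s q : ℂ) =
      -1 + ((b : ℂ) ^ m)⁻¹ * ∑ h ∈ Finset.range (b ^ m), ∏ j ∈ Finset.range s,
        (1 + (Real.sqrt (γ j) * Real.sqrt D : ℝ) *
          chi b α (tent b (hoPoint b p (q j) n h))) := by
  classical
  have hb : (b : ℂ) ≠ 0 := by exact_mod_cast (Fact.out : b.Prime).ne_zero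
  simp only [Finset.prod_one_add]
  rw [Finset.sum_comm, Finset.mul_sum,
    ← Finset.sum_filter_add_sum_filter_not _ (fun u : Finset ℕ => u.Nonempty)]
  have hempty : (Finset.range s).powerset.filter (fun u => ¬ u.Nonempty) = {∅} := by
    ext u
    simp only [Finset.mem_filter, Finset.mem_powerset, Finset.not_nonempty_iff_eq_empty,
      Finset.mem_singleton]
    constructor
    · exact fun h => h.2
    · rintro rfl
      simp
  rw [hempty, Finset.sum_singleton]
  simp only [Finset.prod_empty, Finset.sum_const, Finset.card_range, nsmul_eq_mul, mul_one]
  push_cast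
  rw [inv_mul_cancel₀ (pow_ne_zero _ hb), neg_add_eq_sub, add_sub_cancel_right, Bcrit,
    Complex.ofReal_sum]
  refine Finset.sum_congr rfl fun u hu => ?_
  have hus : u ⊆ Finset.range s := Finset.mem_powerset.1 (Finset.mem_filter.1 hu).1
  rw [Complex.ofReal_mul, ← main_term hα hm hmn hpdeg q u hus]
  have hsq : Real.sqrt (∏ j ∈ u, γ j) * Real.sqrt D ^ u.card =
      ∏ j ∈ u, (Real.sqrt (γ j) * Real.sqrt D) := by
    rw [Finset.prod_mul_distrib, Finset.prod_const, Real.sqrt_prod _ (fun j _ => hγ j)]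
  rw [hsq, mul_left_comm, Finset.mul_sum]
  congr 1
  refine Finset.sum_congr rfl fun h _ => ?_
  simp only [Complex.ofReal_prod, Complex.ofReal_mul, Finset.prod_mul_distrib]


end QMC
end
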